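/- The vector field τ is a master symmetry of the lattice W_{n+1}-system Q⁰: the double Lie bracket vanishes identically, [Q⁰, [Q⁰, τ]](u) = 0 for every u : ℤ → (Fin n → ℝ). -/

import Mathlib

/-- The lattice `W_{n+1}`-algebra flow `Q⁰` on maps `u : ℤ → Fin n → ℝ`
(paper components `i = 1,…,n` correspond to Lean indices `0,…,n-1`, and the
convention `u^{n+1} := u^1` is realized by the index `(i+1) % n`):
`Q⁰(u)^1_s = −u^1_s (u^2_{s+n} − u^2_{s−1})`,
`Q⁰(u)^i_s = u^{i+1}_s − u^{i+1}_{s−1} − u^i_s (u^2_{s+i−1} − u^2_{s−1})`,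
`i = 2,…,n`. -/
noncomputable def Q0 {n : ℕ} (u : ℤ → Fin n → ℝ) : ℤ → Fin n → ℝ := fun s i =>
  let hpos : 0 < n := lt_of_le_of_lt (Nat.zero_le _) i.isLt
  let i1 : Fin n := ⟨1 % n, Nat.mod_lt 1 hpos⟩
  let inxt : Fin n := ⟨((i : ℕ) + 1) % n, Nat.mod_lt _ hpos⟩
  if (i : ℕ) = 0 then
    -(u s i) * (u (s + (n : ℤ)) i1 - u (s - 1) i1)
  else
    u s inxt - u (s - 1) inxt
      - u s i * (u (s + ((i : ℕ) : ℤ)) i1 - u (s - 1) i1)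

/-- The master symmetry `τ`:
`τ(u)^1_s = s·Q⁰(u)^1_s − u^1_s ((n+1)u^2_{s+n} + Σ_{l=0}^{n} u^2_{s+l})`,
`τ(u)^i_s = s·Q⁰(u)^i_s − u^i_s (i·u^2_{s+i−1} + Σ_{l=0}^{i−1} u^2_{s+l})
  + (i+1)u^{i+1}_s`, `i = 2,…,n` (with `u^{n+1} := u^1`). -/
noncomputable def TauVF {n : ℕ} (u : ℤ → Fin n → ℝ) : ℤ → Fin n → ℝ := fun s i =>
  let hpos : 0 < n := lt_of_le_of_lt (Nat.zero_le _) i.isLt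
  let i1 : Fin n := ⟨1 % n, Nat.mod_lt 1 hpos⟩
  let inxt : Fin n := ⟨((i : ℕ) + 1) % n, Nat.mod_lt _ hpos⟩
  if (i : ℕ) = 0 then
    (s : ℝ) * Q0 u s i
      - u s i * (((n : ℝ) + 1) * u (s + (n : ℤ)) i1
          + ∑ l ∈ Finset.range (n + 1), u (s + (l : ℤ)) i1)
  else
    (s : ℝ) * Q0 u s i
      - u s i * ((((i : ℕ) : ℝ) + 1) * u (s + ((i : ℕ) : ℤ)) i1
          + ∑ l ∈ Finset.range ((i : ℕ) + 1), u (s + (l : ℤ)) i1)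
      + (((i : ℕ) : ℝ) + 2) * u s inxt

/-- The partial derivative `∂F/∂u^j_r` of a function of the lattice variables,
taken at the point `u`. -/
noncomputable def pderivAt {n : ℕ} (F : (ℤ → Fin n → ℝ) → ℝ)
    (u : ℤ → Fin n → ℝ) (r : ℤ) (j : Fin n) : ℝ :=
  deriv (fun t : ℝ => F (Function.update u r (Function.update (u r) j t))) (u r j)

/-- The Lie bracket of two vector fields on the space of maps `ℤ → Fin n → ℝ`,
defined componentwise by the (finitely supported) sum
`[X,Y](u)^i_s = Σ_{(r,j)} ( ∂Y^i_s/∂u^j_r · X^j_r − ∂X^i_s/∂u^j_r · Y^j_r )`. -/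
noncomputable def lieBr {n : ℕ}
    (X Y : (ℤ → Fin n → ℝ) → ℤ → Fin n → ℝ)
    (u : ℤ → Fin n → ℝ) : ℤ → Fin n → ℝ := fun s i =>
  ∑ᶠ r : ℤ, ∑ j : Fin n,
    (pderivAt (fun w => Y w s i) u r j * X u r j
      - pderivAt (fun w => X w s i) u r j * Y u r j)

/-- Uniform coordinates: `V u k` is the paper's component `k+1`, with paper component `n+1`
being the first one and all further ones zero. -/
noncomputable def V {n : ℕ} (u : ℤ → Fin n → ℝ) (k : ℕ) (s : ℤ) : ℝ :=
  if h : k < n then u s ⟨k, h⟩ else if h : k = n ∧ 0 < n then u s ⟨0, h.2⟩ else 0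

def idx {n : ℕ} (i : Fin n) : ℕ := if (i : ℕ) = 0 then n else i

theorem V_idx {n : ℕ} (u : ℤ → Fin n → ℝ) (s : ℤ) (i : Fin n) : V u (idx i) s = u s i := by
  obtain ⟨i, hi⟩ := i
  unfold V idx
  by_cases h : i = 0
  · subst h
    simp [hi]
  · simp [h, hi]

theorem V_mk {n : ℕ} (F : ℕ → ℤ → ℝ) (hF : ∀ k, n < k → ∀ s, F k s = 0) (k : ℕ) (hk : 1 ≤ k)
    (s : ℤ) : V (fun s (i : Fin n) => F (idx i) s) k s = F k s := by
  unfold V idx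
  by_cases h : k < n
  · have : k ≠ 0 := by omega
    simp [h, this]
  · by_cases h2 : k = n
    · subst h2
      have : 0 < k := by omega
      simp [this]
    · simp [h, h2]
      rw [hF k (by omega)]

theorem V_gt {n : ℕ} (u : ℤ → Fin n → ℝ) (k : ℕ) (hk : n < k) (s : ℤ) : V u k s = 0 := by
  unfold V
  have h1 : ¬ k < n := by omega
  have h2 : ¬ k = n := by omega
  simp [h1, h2]

noncomputable def QV {n : ℕ} (u : ℤ → Fin n → ℝ) (k : ℕ) (s : ℤ) : ℝ :=
  V u (k+1) s - V u (k+1) (s-1) - V u k s * (V u 1 (s+k) - V u 1 (s-1))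

noncomputable def TV {n : ℕ} (u : ℤ → Fin n → ℝ) (k : ℕ) (s : ℤ) : ℝ :=
  (s:ℝ) * (V u (k+1) s - V u (k+1) (s-1) - V u k s * (V u 1 (s+k) - V u 1 (s-1)))
   - V u k s * (((k:ℝ)+1) * V u 1 (s+k) + ∑ l ∈ Finset.range (k+1), V u 1 (s+l))
   + ((k:ℝ)+2) * V u (k+1) s

/-- auxiliary density of the next flow -/
noncomputable def HV {n : ℕ} (u : ℤ → Fin n → ℝ) (p : ℤ) : ℝ :=
  V u 2 p + V u 2 (p-1) - V u 1 p * (V u 1 (p+1) + V u 1 p + V u 1 (p-1))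

/-- the next flow -/
noncomputable def KV {n : ℕ} (u : ℤ → Fin n → ℝ) (k : ℕ) (s : ℤ) : ℝ :=
  V u (k+2) (s-2) - V u (k+2) s + V u (k+1) s * (V u 1 (s+k+1) + V u 1 (s+k))
  - V u (k+1) (s-1) * (V u 1 (s-1) + V u 1 (s-2)) + V u k s * (HV u (s+k) - HV u (s-1))

theorem V_one {n : ℕ} (hn : 2 ≤ n) (u : ℤ → Fin n → ℝ) (s : ℤ) (h : 1 % n < n) :
    u s ⟨1 % n, h⟩ = V u 1 s := by
  have h1 : 1 % n = 1 := Nat.mod_eq_of_lt (by omega)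
  have h2 : 1 < n := by omega
  simp [V, h1, h2]

theorem V_next {n : ℕ} (u : ℤ → Fin n → ℝ) (s : ℤ) (i : ℕ) (hi : i < n)
    (h : (i + 1) % n < n) :
    u s ⟨(i + 1) % n, h⟩ = V u (i+1) s := by
  unfold V
  by_cases h2 : i + 1 < n
  · simp [Nat.mod_eq_of_lt h2, h2]
  · have h3 : i + 1 = n := by omega
    have h4 : 0 < n := by omega
    simp [h3, h4]

theorem Q0_eq {n : ℕ} (hn : 2 ≤ n) (u : ℤ → Fin n → ℝ) (s : ℤ) (i : Fin n) :
    Q0 u s i = QV u (idx i) s := by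
  have hV := V_idx u s i
  by_cases h : (i : ℕ) = 0
  · have hx : idx i = n := by simp [idx, h]
    unfold Q0 QV
    simp only [h, if_true, V_one hn]
    rw [← hV, hx, V_gt u (n+1) (by omega), V_gt u (n+1) (by omega)]
    ring
  · have hx : idx i = i := by simp [idx, h]
    unfold Q0 QV
    simp only [h, if_false, V_one hn, V_next u _ _ i.isLt]
    rw [← hV, hx]

theorem Tau_eq {n : ℕ} (hn : 2 ≤ n) (u : ℤ → Fin n → ℝ) (s : ℤ) (i : Fin n) :
    TauVF u s i = TV u (idx i) s := by
  have hV := V_idx u s i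
  have hQ := Q0_eq hn u s i
  unfold QV at hQ
  unfold TauVF TV
  rw [← hQ, hV]
  by_cases h : (i : ℕ) = 0
  · have hx : idx i = n := by simp [idx, h]
    simp only [h, if_true, V_one hn]
    rw [hx, V_gt u (n+1) (by omega)]
    ring
  · have hx : idx i = i := by simp [idx, h]
    simp only [h, if_false, V_one hn, V_next u _ _ i.isLt]
    rw [hx]

theorem V_Q0 {n : ℕ} (hn : 2 ≤ n) (u : ℤ → Fin n → ℝ) (k : ℕ) (hk : 1 ≤ k) (s : ℤ) :
    V (Q0 u) k s = QV u k s := by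
  have : Q0 u = fun s (i : Fin n) => QV u (idx i) s := by
    funext s i; exact Q0_eq hn u s i
  rw [this]
  refine V_mk (QV u) ?_ k hk s
  intro k hk s
  simp [QV, V_gt u k hk, V_gt u (k+1) (by omega)]

theorem V_Tau {n : ℕ} (hn : 2 ≤ n) (u : ℤ → Fin n → ℝ) (k : ℕ) (hk : 1 ≤ k) (s : ℤ) :
    V (TauVF u) k s = TV u k s := by
  have : TauVF u = fun s (i : Fin n) => TV u (idx i) s := by
    funext s i; exact Tau_eq hn u s i
  rw [this]
  refine V_mk (TV u) ?_ k hk s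
  intro k hk s
  simp [TV, V_gt u k hk, V_gt u (k+1) (by omega)]

theorem V_K {n : ℕ} (u : ℤ → Fin n → ℝ) (k : ℕ) (hk : 1 ≤ k) (s : ℤ) :
    V (fun s (i : Fin n) => KV u (idx i) s) k s = KV u k s := by
  refine V_mk (KV u) ?_ k hk s
  intro k hk s
  simp [KV, V_gt u k hk, V_gt u (k+1) (by omega), V_gt u (k+2) (by omega)]

/-- `F` depends on finitely many variables near `u` to first order, and its derivative in the
direction `ξ` is `d`. -/
def DD {n : ℕ} (F : (ℤ → Fin n → ℝ) → ℝ) (u ξ : ℤ → Fin n → ℝ) (d : ℝ) : Prop :=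
  ∃ g : (ℤ × Fin n) →₀ ℝ,
    (∀ r j, HasDerivAt (fun t : ℝ => F (Function.update u r (Function.update (u r) j t)))
      (g (r, j)) (u r j)) ∧ d = g.sum fun p c => c * ξ p.1 p.2

theorem upd_self {n : ℕ} (u : ℤ → Fin n → ℝ) (r : ℤ) (j : Fin n) :
    Function.update u r (Function.update (u r) j (u r j)) = u := by simp

theorem DD.const {n : ℕ} (c : ℝ) (u ξ : ℤ → Fin n → ℝ) : DD (fun _ => c) u ξ 0 :=
  ⟨0, fun r j => by simpa using hasDerivAt_const _ _, by simp⟩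

theorem DD.coord {n : ℕ} (u ξ : ℤ → Fin n → ℝ) (s : ℤ) (i : Fin n) :
    DD (fun w => w s i) u ξ (ξ s i) := by
  classical
  refine ⟨Finsupp.single (s, i) 1, fun r j => ?_, by simp⟩
  by_cases h : s = r
  · subst h
    by_cases h2 : i = j
    · subst h2
      simpa using hasDerivAt_id' (u s i)
    · have : ((s, i) : ℤ × Fin n) ≠ (s, j) := by simp [h2]
      simpa [h2, Finsupp.single_apply] using hasDerivAt_const _ _
  · simpa [h, Finsupp.single_apply] using hasDerivAt_const _ _

theorem DD.V {n : ℕ} (u ξ : ℤ → Fin n → ℝ) (k : ℕ) (s : ℤ) :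
    DD (fun w => _root_.V w k s) u ξ (_root_.V ξ k s) := by
  unfold _root_.V
  split_ifs
  · exact DD.coord _ _ _ _
  · exact DD.coord _ _ _ _
  · exact DD.const _ _ _

theorem DD.add {n : ℕ} {F G : (ℤ → Fin n → ℝ) → ℝ} {u ξ : ℤ → Fin n → ℝ} {d e : ℝ}
    (hF : DD F u ξ d) (hG : DD G u ξ e) : DD (fun w => F w + G w) u ξ (d + e) := by
  classical
  obtain ⟨f, hf, rfl⟩ := hF
  obtain ⟨g, hg, rfl⟩ := hG
  refine ⟨f + g, fun r j => (hf r j).add (hg r j), ?_⟩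
  rw [Finsupp.sum_add_index'] <;> intros <;> ring

theorem DD.mul {n : ℕ} {F G : (ℤ → Fin n → ℝ) → ℝ} {u ξ : ℤ → Fin n → ℝ} {d e : ℝ}
    (hF : DD F u ξ d) (hG : DD G u ξ e) :
    DD (fun w => F w * G w) u ξ (d * G u + F u * e) := by
  classical
  obtain ⟨f, hf, rfl⟩ := hF
  obtain ⟨g, hg, rfl⟩ := hG
  refine ⟨G u • f + F u • g, fun r j => ?_, ?_⟩
  · have := (hf r j).mul (hg r j)
    rw [upd_self] at this
    refine this.congr_deriv ?_
    simp only [Finsupp.add_apply, Finsupp.smul_apply, smul_eq_mul]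
    ring
  · rw [Finsupp.sum_add_index', Finsupp.sum_smul_index', Finsupp.sum_smul_index']
    · simp only [Finsupp.sum, Finset.sum_mul, Finset.mul_sum, smul_eq_mul]
      congr 1 <;> apply Finset.sum_congr rfl <;> intros <;> ring
    all_goals intros; simp [add_mul]

theorem DD.sub {n : ℕ} {F G : (ℤ → Fin n → ℝ) → ℝ} {u ξ : ℤ → Fin n → ℝ} {d e : ℝ}
    (hF : DD F u ξ d) (hG : DD G u ξ e) : DD (fun w => F w - G w) u ξ (d - e) := by
  have h := hF.add ((DD.const (-1) u ξ).mul hG)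
  convert h using 1
  · funext w; ring
  · ring

theorem DD.cmul {n : ℕ} {G : (ℤ → Fin n → ℝ) → ℝ} {u ξ : ℤ → Fin n → ℝ} {e : ℝ} (c : ℝ)
    (hG : DD G u ξ e) : DD (fun w => c * G w) u ξ (c * e) := by
  have h := (DD.const c u ξ).mul hG
  convert h using 1
  ring

theorem DD.sum {n : ℕ} {F : ℕ → (ℤ → Fin n → ℝ) → ℝ} {u ξ : ℤ → Fin n → ℝ} {d : ℕ → ℝ}
    (hF : ∀ l, DD (F l) u ξ (d l)) (m : ℕ) :
    DD (fun w => ∑ l ∈ Finset.range m, F l w) u ξ (∑ l ∈ Finset.range m, d l) := by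
  induction m with
  | zero => simpa using DD.const 0 u ξ
  | succ m ih =>
    simp only [Finset.sum_range_succ]
    exact ih.add (hF m)

theorem lieBr_eq {n : ℕ} {X Y : (ℤ → Fin n → ℝ) → ℤ → Fin n → ℝ} {u : ℤ → Fin n → ℝ}
    {s : ℤ} {i : Fin n} {d e : ℝ}
    (hY : DD (fun w => Y w s i) u (X u) d) (hX : DD (fun w => X w s i) u (Y u) e) :
    lieBr X Y u s i = d - e := by
  classical
  obtain ⟨f, hf, rfl⟩ := hY
  obtain ⟨g, hg, rfl⟩ := hX
  have key : ∀ (h : (ℤ × Fin n) →₀ ℝ) (S : Finset ℤ) (_ : h.support.image Prod.fst ⊆ S)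
      (Z : ℤ → Fin n → ℝ), (h.sum fun p c => c * Z p.1 p.2)
        = ∑ r ∈ S, ∑ j, h (r, j) * Z r j := by
    intro h S hS Z
    rw [← Finset.sum_product', Finsupp.sum]
    apply Finset.sum_subset
    · intro p hp
      simp only [Finset.mem_product, Finset.mem_univ, and_true]
      exact hS (Finset.mem_image_of_mem _ hp)
    · intro p _ hp
      simp [Finsupp.notMem_support_iff.mp hp]
  unfold lieBr
  have h1 : ∀ r j, pderivAt (fun w => Y w s i) u r j = f (r, j) := fun r j => (hf r j).deriv
  have h2 : ∀ r j, pderivAt (fun w => X w s i) u r j = g (r, j) := fun r j => (hg r j).deriv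
  simp only [h1, h2]
  let S := f.support.image Prod.fst ∪ g.support.image Prod.fst
  rw [key f S Finset.subset_union_left, key g S Finset.subset_union_right,
    ← Finset.sum_sub_distrib]
  simp only [← Finset.sum_sub_distrib]
  apply finsum_eq_sum_of_support_subset
  intro r hr
  by_contra hS
  apply hr
  apply Finset.sum_eq_zero
  intro j _
  have hS' : r ∉ S := by simpa using hS
  have a1 : f (r, j) = 0 := by
    by_contra h0
    exact hS' (Finset.mem_union_left _
      (Finset.mem_image.mpr ⟨(r, j), Finsupp.mem_support_iff.mpr h0, rfl⟩))
  have a2 : g (r, j) = 0 := by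
    by_contra h0
    exact hS' (Finset.mem_union_right _
      (Finset.mem_image.mpr ⟨(r, j), Finsupp.mem_support_iff.mpr h0, rfl⟩))
  simp [a1, a2]

/-- Derivative of `QV`. -/
theorem DD_QV {n : ℕ} (u ξ : ℤ → Fin n → ℝ) (k : ℕ) (s : ℤ) :
    DD (fun w => QV w k s) u ξ
      (V ξ (k+1) s - V ξ (k+1) (s-1) - (V ξ k s * (V u 1 (s+k) - V u 1 (s-1))
        + V u k s * (V ξ 1 (s+k) - V ξ 1 (s-1)))) :=
  ((DD.V _ _ _ _).sub (DD.V _ _ _ _)).sub ((DD.V _ _ _ _).mul ((DD.V _ _ _ _).sub (DD.V _ _ _ _)))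

theorem DD_TV {n : ℕ} (u ξ : ℤ → Fin n → ℝ) (k : ℕ) (s : ℤ) :
    DD (fun w => TV w k s) u ξ
      ((s:ℝ) * (V ξ (k+1) s - V ξ (k+1) (s-1) - (V ξ k s * (V u 1 (s+k) - V u 1 (s-1))
        + V u k s * (V ξ 1 (s+k) - V ξ 1 (s-1))))
      - (V ξ k s * (((k:ℝ)+1) * V u 1 (s+k) + ∑ l ∈ Finset.range (k+1), V u 1 (s+l))
        + V u k s * (((k:ℝ)+1) * V ξ 1 (s+k) + ∑ l ∈ Finset.range (k+1), V ξ 1 (s+l)))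
      + ((k:ℝ)+2) * V ξ (k+1) s) :=
  ((DD.cmul _ (DD_QV u ξ k s)).sub ((DD.V _ _ _ _).mul
    ((DD.cmul _ (DD.V _ _ _ _)).add (DD.sum (fun _ => DD.V _ _ _ _) _)))).add
    (DD.cmul _ (DD.V _ _ _ _))

theorem sum_Q {n : ℕ} (u : ℤ → Fin n → ℝ) (m : ℕ) (s : ℤ) :
    ∑ l ∈ Finset.range (m+1), QV u 1 (s+l) = V u 2 (s+m) - V u 2 (s-1)
      - V u 1 (s+m) * V u 1 (s+m+1) + V u 1 (s-1) * V u 1 s := by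
  induction m with
  | zero => simp [QV]; ring_nf
  | succ m ih =>
    rw [Finset.sum_range_succ, ih]
    simp only [QV]
    push_cast
    ring_nf

theorem first {n : ℕ} (hn : 2 ≤ n) (u : ℤ → Fin n → ℝ) (s : ℤ) (i : Fin n) :
    lieBr Q0 TauVF u s i = KV u (idx i) s := by
  have hQ : (fun w => Q0 w s i) = fun w => QV w (idx i) s := by
    funext w; exact Q0_eq hn w s i
  have hT : (fun w => TauVF w s i) = fun w => TV w (idx i) s := by
    funext w; exact Tau_eq hn w s i
  have hk : 1 ≤ idx i := by unfold idx; split_ifs <;> omega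
  rw [lieBr_eq (d := _) (e := _) (hT ▸ DD_TV u (Q0 u) (idx i) s)
    (hQ ▸ DD_QV u (TauVF u) (idx i) s)]
  generalize idx i = k at hk
  have h1 : ∀ s, V (Q0 u) 1 s = QV u 1 s := V_Q0 hn u 1 le_rfl
  have h2 : ∀ s, V (TauVF u) 1 s = TV u 1 s := V_Tau hn u 1 le_rfl
  simp only [h1, h2, V_Q0 hn u k hk, V_Q0 hn u (k+1) (by omega), V_Tau hn u k hk,
    V_Tau hn u (k+1) (by omega), sum_Q]
  have e1 : ∑ l ∈ Finset.range (k+1+1), V u 1 (s+l)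
      = ∑ l ∈ Finset.range (k+1), V u 1 (s+l) + V u 1 (s+k+1) := by
    rw [Finset.sum_range_succ]; push_cast; ring_nf
  have e2 : ∑ l ∈ Finset.range (k+1+1), V u 1 (s-1+l)
      = ∑ l ∈ Finset.range (k+1), V u 1 (s+l) + V u 1 (s-1) := by
    rw [Finset.sum_range_succ']; push_cast; ring_nf
  simp only [TV, QV, KV, HV, e1, e2]
  generalize ∑ l ∈ Finset.range (k+1), V u 1 (s+l) = S
  simp only [Finset.sum_range_succ, Finset.sum_range_zero]
  push_cast
  ring_nf

theorem DD_HV {n : ℕ} (u ξ : ℤ → Fin n → ℝ) (p : ℤ) :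
    DD (fun w => HV w p) u ξ
      (V ξ 2 p + V ξ 2 (p-1) - (V ξ 1 p * (V u 1 (p+1) + V u 1 p + V u 1 (p-1))
        + V u 1 p * (V ξ 1 (p+1) + V ξ 1 p + V ξ 1 (p-1)))) :=
  ((DD.V _ _ _ _).add (DD.V _ _ _ _)).sub ((DD.V _ _ _ _).mul
    (((DD.V _ _ _ _).add (DD.V _ _ _ _)).add (DD.V _ _ _ _)))

theorem second {n : ℕ} (hn : 2 ≤ n) (u : ℤ → Fin n → ℝ) (s : ℤ) (i : Fin n) :
    lieBr Q0 (fun w s (i : Fin n) => KV w (idx i) s) u s i = 0 := by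
  have hQ : (fun w => Q0 w s i) = fun w => QV w (idx i) s := by
    funext w; exact Q0_eq hn w s i
  have hk : 1 ≤ idx i := by unfold idx; split_ifs <;> omega
  have hK := fun ξ k => ((((DD.V u ξ (k+2) (s-2)).sub (DD.V u ξ (k+2) s)).add
    ((DD.V u ξ (k+1) s).mul ((DD.V u ξ 1 (s+k+1)).add (DD.V u ξ 1 (s+k))))).sub
    ((DD.V u ξ (k+1) (s-1)).mul ((DD.V u ξ 1 (s-1)).add (DD.V u ξ 1 (s-2))))).add
    ((DD.V u ξ k s).mul ((DD_HV u ξ (s+k)).sub (DD_HV u ξ (s-1))))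
  rw [lieBr_eq (hK (Q0 u) (idx i)) (hQ ▸ DD_QV u _ (idx i) s)]
  generalize idx i = k at hk
  have h1 : ∀ s, V (Q0 u) 1 s = QV u 1 s := V_Q0 hn u 1 le_rfl
  have h2 : ∀ s, V (Q0 u) 2 s = QV u 2 s := V_Q0 hn u 2 (by omega)
  simp only [h1, h2, V_Q0 hn u k hk, V_Q0 hn u (k+1) (by omega), V_Q0 hn u (k+2) (by omega),
    V_K u k hk, V_K u (k+1) (by omega), V_K u 1 le_rfl]
  simp only [QV, KV, HV]
  push_cast
  ring_nf

/-- `τ` is a master symmetry of the lattice `W_{n+1}`-system `Q⁰`: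
`[Q⁰, [Q⁰, τ]] = 0` identically. -/
theorem stmt_19 {n : ℕ} (hn : 2 ≤ n) (u : ℤ → Fin n → ℝ) (s : ℤ) (i : Fin n) :
    lieBr Q0 (lieBr Q0 TauVF) u s i = 0 := by
  have h : lieBr Q0 TauVF = fun (w : ℤ → Fin n → ℝ) s (i : Fin n) => KV w (idx i) s := by
    funext w s i
    exact first hn w s i
  rw [h]
  exact second hn u s i
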